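/- arXiv:2012.13795 — 2 statements merged into one kernel-verified Lean document; each statement's English description precedes it below -/
import Mathlib

section
/- Let σ ≤ π be permutations. Suppose that for each τ ∈ [σ,π] a subset NE(τ,π) of E(τ,π) is fixed (the 'normal' embeddings of τ into π), with NE(π,π) = E(π,π). For λ ∈ [σ,π), let NE_λ(odd,π) be the union of the sets NE(τ,π) over all τ ∈ [λ,π] of odd length, and NE_λ(even,π) the union of the sets NE(τ,π) over all τ ∈ [λ,π] of even length. If for every λ ∈ [σ,π) with μ(σ,λ) ≠ 0 one has |NE_λ(odd,π)| = |NE_λ(even,π)|, then μ(σ,π) = (−1)^{|π|−|σ|} · |NE(σ,π)|. -/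
/-!
The permutation pattern poset and its Möbius function.

A permutation of length `n` is represented as an element of the symmetric
group on `Fin n`; the collection of all permutations of all lengths is the
sigma type `PPerm`.  Pattern containment `PPerm.Le` makes `PPerm` into the
permutation pattern poset, and `mu` is its Möbius function, defined by the
usual recursion `μ(σ,σ) = 1`, `μ(σ,π) = -∑_{σ ≤ λ < π} μ(σ,λ)` for `σ < π`
and `μ(σ,π) = 0` otherwise.
-/

open scoped Classical

/-- A permutation of an arbitrary finite length `n`, as an element of the
symmetric group on `Fin n`. -/
abbrev PPerm : Type := Σ n : ℕ, Equiv.Perm (Fin n)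

namespace PPerm

/-- Classical pattern containment `σ ≤ π`: there is a strictly increasing map
of positions along which `π` realises the same relative order as `σ`. -/
def Le (σ π : PPerm) : Prop :=
  ∃ f : Fin σ.1 → Fin π.1, StrictMono f ∧
    ∀ a b : Fin σ.1, σ.2 a < σ.2 b ↔ π.2 (f a) < π.2 (f b)

/-- Strict pattern containment. -/
def Lt (σ π : PPerm) : Prop := Le σ π ∧ σ ≠ π

/-- The permutation `1` of length one. -/
def one : PPerm := ⟨1, 1⟩

/-- The direct sum `α ⊕ β` of two permutations: `β` is placed after and
above `α`. -/
def dsum (α β : PPerm) : PPerm :=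
  ⟨α.1 + β.1, finSumFinEquiv.symm.trans ((Equiv.sumCongr α.2 β.2).trans finSumFinEquiv)⟩

end PPerm

/-- Fuelled recursion computing the Möbius function of the permutation
pattern poset.  Any `λ` with `σ ≤ λ < π` has length `< |π|`, so for any
fuel `≥ |π| + 1` this computes the standard recursion
`μ(σ,σ) = 1`, `μ(σ,π) = -∑_{σ ≤ λ < π} μ(σ,λ)` for `σ < π`, and
`μ(σ,π) = 0` when `σ ≰ π`. -/
noncomputable def muAux : ℕ → PPerm → PPerm → ℤ
  | 0, _, _ => 0
  | n + 1, σ, π =>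
    if σ = π then 1
    else if PPerm.Le σ π then
      - ∑ m ∈ Finset.range π.1,
          ∑ p ∈ Finset.univ.filter
              (fun p : Equiv.Perm (Fin m) => PPerm.Le σ ⟨m, p⟩ ∧ PPerm.Le ⟨m, p⟩ π),
            muAux n σ ⟨m, p⟩
    else 0

/-- The Möbius function of the permutation pattern poset. -/
noncomputable def mu (σ π : PPerm) : ℤ := muAux (π.1 + 1) σ π

/-- The closed interval `[σ, π]` of the permutation pattern poset, as a
finset (any `λ ≤ π` has length `≤ |π|`). -/
noncomputable def intervalCC (σ π : PPerm) : Finset PPerm :=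
  (Finset.range (π.1 + 1)).biUnion fun m =>
    (Finset.univ.filter fun p : Equiv.Perm (Fin m) =>
        PPerm.Le σ ⟨m, p⟩ ∧ PPerm.Le ⟨m, p⟩ π).image fun p => (⟨m, p⟩ : PPerm)

/-- The half-open interval `[σ, π)` of the permutation pattern poset. -/
noncomputable def intervalCO (σ π : PPerm) : Finset PPerm :=
  (intervalCC σ π).filter fun lam => lam ≠ π

/-- `s` is the image of an embedding of `τ` into `π`.  Since an embedding of
`τ` into `π` (a strictly increasing map of positions realising the pattern
`τ`) is uniquely determined by its image, we identify the set `E(τ,π)` of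
embeddings of `τ` into `π` with the collection of such image sets; this also
makes embeddings with different sources distinct objects. -/
def IsEmbeddingImage (τ π : PPerm) (s : Finset (Fin π.1)) : Prop :=
  ∃ f : Fin τ.1 → Fin π.1, StrictMono f ∧
    (∀ a b : Fin τ.1, τ.2 a < τ.2 b ↔ π.2 (f a) < π.2 (f b)) ∧
    Finset.image f Finset.univ = s

/-!
Put `f τ = (-1) ^ |τ| * |NE(τ,π)|`. Distinct patterns have disjoint sets of embedding images, so
the cancellation hypothesis says that `∑ τ ∈ [λ,π], f τ` vanishes whenever `λ < π` and
`μ(σ,λ) ≠ 0`. Möbius inversion on `[σ,π]` writes `f σ` as the sum over `λ` of `μ(σ,λ)` times these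
sums, and only the term `λ = π` survives: `f σ = μ(σ,π) * f π = μ(σ,π) * (-1) ^ |π|`.
-/

section MoebiusInversion

variable {α R : Type*} [PartialOrder α] [LocallyFiniteOrder α] [DecidableEq α] [Ring R] {a b : α}

theorem sum_Icc_mu_mul_sum_Icc (hab : a ≤ b) (f : α → R) :
    ∑ x ∈ Finset.Icc a b, IncidenceAlgebra.mu R a x * ∑ y ∈ Finset.Icc x b, f y = f a := by
  calc
    _ = ∑ y ∈ Finset.Icc a b, ∑ x ∈ Finset.Icc a y, IncidenceAlgebra.mu R a x * f y := by
      simp only [Finset.mul_sum]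
      refine Finset.sum_comm' fun x y ↦ ?_
      simp only [Finset.mem_Icc]
      exact ⟨fun ⟨⟨hax, _⟩, hxy, hyb⟩ ↦ ⟨⟨hax, hxy⟩, hax.trans hxy, hyb⟩,
        fun ⟨⟨hax, hxy⟩, _, hyb⟩ ↦ ⟨⟨hax, hxy.trans hyb⟩, hxy, hyb⟩⟩
    _ = ∑ y ∈ Finset.Icc a b, if a = y then f y else 0 := by
      simp only [← Finset.sum_mul, IncidenceAlgebra.sum_Icc_mu_right, ite_mul, one_mul, zero_mul]
    _ = f a := by
      rw [Finset.sum_ite_eq, if_pos (Finset.left_mem_Icc.2 hab)]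

theorem mu_mul_eq_of_sum_Icc_eq_zero (hab : a ≤ b) {f : α → R}
    (h : ∀ x ∈ Finset.Ico a b, IncidenceAlgebra.mu R a x ≠ 0 → ∑ y ∈ Finset.Icc x b, f y = 0) :
    IncidenceAlgebra.mu R a b * f b = f a := by
  have lower_terms : ∀ x ∈ Finset.Ico a b,
      IncidenceAlgebra.mu R a x * ∑ y ∈ Finset.Icc x b, f y = 0 := by
    intro x hx
    by_cases hμ : IncidenceAlgebra.mu R a x = 0
    · rw [hμ, zero_mul]
    · rw [h x hx hμ, mul_zero]
  rw [← sum_Icc_mu_mul_sum_Icc hab f, Finset.Icc_eq_cons_Ico hab, Finset.sum_cons,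
    Finset.sum_eq_zero lower_terms, add_zero, Finset.Icc_self, Finset.sum_singleton]

end MoebiusInversion

section Signs

theorem sum_neg_one_pow_mul_card {ι α : Type*} [DecidableEq α] {s : Finset ι} {t : ι → Finset α}
    (ht : (s : Set ι).PairwiseDisjoint t) (ℓ : ι → ℕ) :
    ∑ i ∈ s, (-1 : ℤ) ^ ℓ i * (t i).card =
      ((s.filter fun i ↦ Even (ℓ i)).biUnion t).card -
        ((s.filter fun i ↦ Odd (ℓ i)).biUnion t).card := by
  have card_biUnion_filter (p : ι → Prop) [DecidablePred p] :
      ((s.filter p).biUnion t).card = ∑ i ∈ s.filter p, (t i).card :=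
    Finset.card_biUnion (ht.subset (Finset.coe_subset.2 (s.filter_subset p)))
  have even_part : ∀ i ∈ s.filter (fun i ↦ Even (ℓ i)),
      (-1 : ℤ) ^ ℓ i * (t i).card = (t i).card := fun i hi ↦ by
    rw [(Finset.mem_filter.1 hi).2.neg_one_pow, one_mul]
  have odd_part : ∀ i ∈ s.filter (fun i ↦ Odd (ℓ i)),
      (-1 : ℤ) ^ ℓ i * (t i).card = -(t i).card := fun i hi ↦ by
    rw [(Finset.mem_filter.1 hi).2.neg_one_pow, neg_one_mul]
  rw [← Finset.sum_filter_add_sum_filter_not s (fun i ↦ Even (ℓ i))]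
  simp only [Nat.not_even_iff_odd]
  rw [Finset.sum_congr rfl even_part, Finset.sum_congr rfl odd_part, Finset.sum_neg_distrib,
    card_biUnion_filter, card_biUnion_filter, Nat.cast_sum, Nat.cast_sum, sub_eq_add_neg]

variable {R : Type*} [Ring R]

theorem neg_one_pow_mul_neg_one_pow_mul (n : ℕ) (a : R) : (-1) ^ n * ((-1) ^ n * a) = a := by
  rw [← mul_assoc, ← pow_add, (Even.add_self n).neg_one_pow, one_mul]

theorem eq_neg_one_pow_sub_mul {m n : ℕ} (hmn : m ≤ n) {a b : R}
    (h : (-1) ^ n * a = (-1) ^ m * b) : a = (-1) ^ (n - m) * b :=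
  calc
    a = (-1) ^ n * ((-1) ^ n * a) := (neg_one_pow_mul_neg_one_pow_mul n a).symm
    _ = (-1) ^ (n - m) * ((-1) ^ m * ((-1) ^ m * b)) := by
      rw [h, ← pow_sub_mul_pow (-1 : R) hmn, mul_assoc]
    _ = (-1) ^ (n - m) * b := by rw [neg_one_pow_mul_neg_one_pow_mul]

end Signs

theorem equiv_eq_of_lt_iff_lt {α β : Type*} [LinearOrder β] [WellFoundedLT β] {p q : α ≃ β}
    (h : ∀ a b, p a < p b ↔ q a < q b) : p = q := by
  have strictMono : StrictMono (p.symm.trans q) := fun x y hxy ↦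
    (h _ _).1 (by simpa only [Equiv.apply_symm_apply] using hxy)
  have eq_refl : strictMono.orderIsoOfSurjective _ (p.symm.trans q).surjective =
      OrderIso.refl β := Subsingleton.elim _ _
  ext a
  simpa using (DFunLike.congr_fun eq_refl (p a)).symm

namespace IsEmbeddingImage

variable {τ τ' π : PPerm} {s : Finset (Fin π.1)}

theorem card_eq (h : IsEmbeddingImage τ π s) : s.card = τ.1 := by
  obtain ⟨f, hf, -, rfl⟩ := h
  rw [Finset.card_image_of_injective _ hf.injective, Finset.card_fin]

theorem eq_univ (h : IsEmbeddingImage τ π s) (hlen : π.1 ≤ τ.1) : s = Finset.univ := by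
  rw [← Finset.card_eq_iff_eq_univ, Fintype.card_fin]
  exact (card_finset_fin_le s).antisymm (hlen.trans_eq h.card_eq.symm)

theorem pattern_unique (h : IsEmbeddingImage τ π s) (h' : IsEmbeddingImage τ' π s) : τ = τ' := by
  have length_eq : τ.1 = τ'.1 := h.card_eq.symm.trans h'.card_eq
  obtain ⟨n, p⟩ := τ
  obtain ⟨m, q⟩ := τ'
  obtain rfl : n = m := length_eq
  obtain ⟨f, hf, hfp, hfs⟩ := h
  obtain ⟨g, hg, hgq, hgs⟩ := h'
  obtain rfl : f = g := (hf.range_inj hg).1 <| by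
    simpa only [Finset.coe_image, Finset.coe_univ, Set.image_univ] using
      congrArg (fun t : Finset (Fin π.1) ↦ (t : Set (Fin π.1))) (hfs.trans hgs.symm)
  exact congrArg (Sigma.mk n) (equiv_eq_of_lt_iff_lt fun a b ↦ (hfp a b).trans (hgq a b).symm)

theorem self_univ (π : PPerm) : IsEmbeddingImage π π Finset.univ :=
  ⟨id, strictMono_id, fun _ _ ↦ Iff.rfl, Finset.image_id⟩

theorem self_iff : IsEmbeddingImage π π s ↔ s = Finset.univ :=
  ⟨fun h ↦ h.eq_univ le_rfl, fun h ↦ h ▸ self_univ π⟩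

theorem pairwiseDisjoint {A : Set PPerm} {NE : PPerm → Finset (Finset (Fin π.1))}
    (h : ∀ τ ∈ A, ∀ s ∈ NE τ, IsEmbeddingImage τ π s) : A.PairwiseDisjoint NE :=
  fun τ hτ τ' hτ' hne ↦ Finset.disjoint_left.2 fun s hs hs' ↦
    hne ((h τ hτ s hs).pattern_unique (h τ' hτ' s hs'))

end IsEmbeddingImage

namespace PPerm

variable {σ τ π : PPerm}

theorem le_iff_exists_isEmbeddingImage : Le σ π ↔ ∃ s, IsEmbeddingImage σ π s :=
  ⟨fun ⟨f, hf, hfσ⟩ ↦ ⟨_, f, hf, hfσ, rfl⟩, fun ⟨_, f, hf, hfσ, _⟩ ↦ ⟨f, hf, hfσ⟩⟩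

theorem Le.refl (π : PPerm) : Le π π :=
  ⟨id, strictMono_id, fun _ _ ↦ Iff.rfl⟩

theorem Le.trans (h : Le σ τ) (h' : Le τ π) : Le σ π := by
  obtain ⟨f, hf, hfσ⟩ := h
  obtain ⟨g, hg, hgτ⟩ := h'
  exact ⟨g ∘ f, hg.comp hf, fun a b ↦ (hfσ a b).trans (hgτ _ _)⟩

theorem Le.length_le (h : Le σ π) : σ.1 ≤ π.1 := by
  obtain ⟨s, hs⟩ := le_iff_exists_isEmbeddingImage.1 h
  exact hs.card_eq ▸ card_finset_fin_le s

theorem Le.eq_of_length_le (h : Le σ π) (hlen : π.1 ≤ σ.1) : σ = π := by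
  obtain ⟨s, hs⟩ := le_iff_exists_isEmbeddingImage.1 h
  obtain rfl := hs.eq_univ hlen
  exact hs.pattern_unique (IsEmbeddingImage.self_univ π)

instance : PartialOrder PPerm where
  le := Le
  le_refl := Le.refl
  le_trans _ _ _ := Le.trans
  le_antisymm _ _ h h' := h.eq_of_length_le h'.length_le

theorem lt_iff_length_lt_and_le : σ < π ↔ σ.1 < π.1 ∧ σ ≤ π := by
  rw [lt_iff_le_and_ne, and_comm (a := _ < _)]
  refine and_congr_right fun h ↦ ⟨fun hne ↦ ?_, fun hlt heq ↦ ?_⟩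
  · exact lt_of_not_ge fun hlen ↦ hne (Le.eq_of_length_le h hlen)
  · exact hlt.ne (congrArg Sigma.fst heq)

theorem mem_intervalCC : τ ∈ intervalCC σ π ↔ σ ≤ τ ∧ τ ≤ π := by
  simp only [intervalCC, Finset.mem_biUnion, Finset.mem_range, Finset.mem_image,
    Finset.mem_filter, Finset.mem_univ, true_and]
  constructor
  · rintro ⟨m, -, p, h, rfl⟩
    exact h
  · exact fun h ↦ ⟨τ.1, Nat.lt_succ_of_le (Le.length_le h.2), τ.2, h, rfl⟩

noncomputable instance : LocallyFiniteOrder PPerm :=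
  LocallyFiniteOrder.ofIcc PPerm intervalCC fun _ _ _ ↦ mem_intervalCC

theorem intervalCC_eq_Icc (σ π : PPerm) : intervalCC σ π = Finset.Icc σ π := rfl

theorem intervalCO_eq_Ico (σ π : PPerm) : intervalCO σ π = Finset.Ico σ π := by
  ext τ
  rw [intervalCO, Finset.mem_filter, mem_intervalCC, Finset.mem_Ico, and_assoc, lt_iff_le_and_ne]

theorem Ico_eq_sigma (σ π : PPerm) :
    Finset.Ico σ π = (Finset.range π.1).sigma fun m ↦
      Finset.univ.filter fun p : Equiv.Perm (Fin m) ↦ Le σ ⟨m, p⟩ ∧ Le ⟨m, p⟩ π := by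
  ext τ
  simp only [Finset.mem_Ico, Finset.mem_sigma, Finset.mem_range, Finset.mem_filter,
    Finset.mem_univ, true_and, lt_iff_length_lt_and_le]
  exact and_left_comm

end PPerm

theorem muAux_eq_incidenceAlgebra_mu (σ : PPerm) :
    ∀ {n : ℕ} {π : PPerm}, π.1 < n → muAux n σ π = IncidenceAlgebra.mu ℤ σ π
  | n + 1, π, hπ => by
    rw [muAux, IncidenceAlgebra.mu_apply]
    refine if_congr Iff.rfl rfl ?_
    by_cases hσπ : PPerm.Le σ π
    · rw [if_pos hσπ, PPerm.Ico_eq_sigma, Finset.sum_sigma]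
      refine congrArg Neg.neg <| Finset.sum_congr rfl fun m hm ↦ Finset.sum_congr rfl fun p _ ↦ ?_
      exact muAux_eq_incidenceAlgebra_mu σ ((Finset.mem_range.1 hm).trans_le (Nat.le_of_lt_succ hπ))
    · rw [if_neg hσπ, Finset.Ico_eq_empty fun h ↦ hσπ h.le, Finset.sum_empty, neg_zero]

theorem mu_eq_incidenceAlgebra_mu (σ π : PPerm) : mu σ π = IncidenceAlgebra.mu ℤ σ π :=
  muAux_eq_incidenceAlgebra_mu σ π.1.lt_succ_self

/-- **(Proposition `pro-normal`.)**  Let `σ ≤ π` be permutations, and for each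
`τ ∈ [σ,π]` fix a set `NE(τ,π) ⊆ E(τ,π)` of "normal" embeddings, such that the
unique embedding of `π` into `π` is normal, i.e. `NE(π,π) = E(π,π)`.  If for
every `λ ∈ [σ,π)` with `μ(σ,λ) ≠ 0` the number of normal embeddings into `π`
of odd-length members of `[λ,π]` equals the number of normal embeddings of
even-length members of `[λ,π]`, then `μ(σ,π) = (−1)^{|π|−|σ|}·|NE(σ,π)|`. -/
theorem mu_eq_normal_embeddings (σ π : PPerm) (hσ : 0 < σ.1) (hσπ : PPerm.Le σ π)
    (NE : PPerm → Finset (Finset (Fin π.1)))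
    (hNEsub : ∀ τ ∈ intervalCC σ π, ∀ s ∈ NE τ, IsEmbeddingImage τ π s)
    (hNEtop : NE π = Finset.univ.filter fun s => IsEmbeddingImage π π s)
    (hcancel : ∀ lam ∈ intervalCO σ π, mu σ lam ≠ 0 →
      (((intervalCC lam π).filter fun τ => Odd τ.1).biUnion NE).card =
        (((intervalCC lam π).filter fun τ => Even τ.1).biUnion NE).card) :
    mu σ π = (-1) ^ (π.1 - σ.1) * ((NE σ).card : ℤ) := by
  simp only [PPerm.intervalCC_eq_Icc, PPerm.intervalCO_eq_Ico, mu_eq_incidenceAlgebra_mu]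
    at hNEsub hcancel ⊢
  have card_top : (NE π).card = 1 := by
    simp [hNEtop, IsEmbeddingImage.self_iff, Finset.filter_eq']
  have signed_sum_eq_zero : ∀ lam ∈ Finset.Ico σ π, IncidenceAlgebra.mu ℤ σ lam ≠ 0 →
      ∑ τ ∈ Finset.Icc lam π, (-1 : ℤ) ^ τ.1 * (NE τ).card = 0 := by
    intro lam hlam hμ
    have disjoint : (Finset.Icc lam π : Set PPerm).PairwiseDisjoint NE :=
      IsEmbeddingImage.pairwiseDisjoint fun τ hτ ↦
        hNEsub τ (Finset.Icc_subset_Icc_left (Finset.mem_Ico.1 hlam).1 hτ)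
    rw [sum_neg_one_pow_mul_card disjoint, hcancel lam hlam hμ, sub_self]
  have inversion := mu_mul_eq_of_sum_Icc_eq_zero (α := PPerm) hσπ signed_sum_eq_zero
  rw [card_top, Nat.cast_one, mul_one, mul_comm] at inversion
  exact eq_neg_one_pow_sub_mul hσπ.length_le inversion
end

section
/- Let s_n be the number of permutations of length n that have opposing adjacencies. Then s_n/n! = (1 − 1/e)² + O(1/n); precisely, there exists a constant C > 0 such that |s_n/n! − (1 − 1/e)²| ≤ C/n for all n ≥ 1. -/
/-!
The permutation pattern poset and its Möbius function.

A permutation of length `n` is represented as an element of the symmetric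
group on `Fin n`; the collection of all permutations of all lengths is the
sigma type `PPerm`.  Pattern containment `PPerm.Le` makes `PPerm` into the
permutation pattern poset, and `mu` is its Möbius function, defined by the
usual recursion `μ(σ,σ) = 1`, `μ(σ,π) = -∑_{σ ≤ λ < π} μ(σ,λ)` for `σ < π`
and `μ(σ,π) = 0` otherwise.
-/

open scoped Classical

/-- `π` has an up-adjacency: consecutive positions `i, i+1` with
`π(i+1) = π(i) + 1`. -/
def HasUpAdj (π : PPerm) : Prop :=
  ∃ i j : Fin π.1, (j : ℕ) = (i : ℕ) + 1 ∧ (π.2 j : ℕ) = (π.2 i : ℕ) + 1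

/-- `π` has a down-adjacency: consecutive positions `i, i+1` with
`π(i+1) = π(i) - 1`. -/
def HasDownAdj (π : PPerm) : Prop :=
  ∃ i j : Fin π.1, (j : ℕ) = (i : ℕ) + 1 ∧ (π.2 i : ℕ) = (π.2 j : ℕ) + 1

/-- The number `s_n` of permutations of length `n` having opposing
adjacencies (at least one up-adjacency and at least one down-adjacency). -/
noncomputable def numOpposing (n : ℕ) : ℕ :=
  (Finset.univ.filter fun p : Equiv.Perm (Fin n) =>
    HasUpAdj ⟨n, p⟩ ∧ HasDownAdj ⟨n, p⟩).card

/-!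
For a set `S` of signs let `W` count the adjacencies of a permutation whose sign lies in `S`, and
let `G_n(t) = ∑_π t ^ W(π)` over the permutations `π` of length `n`. Removing the second entry of a
marked adjacency leaves a permutation of length `n - 1` with a marked position and a sign, so
`G_n'(t) = ∑_π W(π) t ^ (W(π) - 1)` is about `|S| (n - 1) G_{n-1}(t)`, while prepending an entry
shows that `G_n(t)` is about `n G_{n-1}(t)`. Both errors are `O((n - 1)!)` uniformly on `[0, 1]`,
because an average permutation has a bounded number of adjacencies for an insertion to interfere
with. Hence `G_n / n!` solves `G' = |S| G`, `G(1) = 1` up to `O(1/n)`, which makes the probability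
`G_n(0) / n!` of `W = 0` equal to `exp (-|S|) + O(1/n)`. Inclusion–exclusion over the two signs
finishes the argument.
-/

namespace OpposingAdjacency

open Finset

section Insertion

variable {m : ℕ}

/-- The permutation obtained from `σ` by inserting an entry of value `v` at position `p`; the other
entries keep their relative order. -/
def insertEntry (p v : Fin (m + 1)) (σ : Equiv.Perm (Fin m)) : Equiv.Perm (Fin (m + 1)) :=
  ((finSuccEquiv' p).trans (Equiv.optionCongr σ)).trans (finSuccEquiv' v).symm

@[simp]
lemma insertEntry_self (p v : Fin (m + 1)) (σ : Equiv.Perm (Fin m)) :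
    insertEntry p v σ p = v := by
  simp [insertEntry]

@[simp]
lemma insertEntry_succAbove (p v : Fin (m + 1)) (σ : Equiv.Perm (Fin m)) (a : Fin m) :
    insertEntry p v σ (p.succAbove a) = v.succAbove (σ a) := by
  simp [insertEntry]

lemma insertEntry_bijective (p : Fin (m + 1)) :
    Function.Bijective fun q : Equiv.Perm (Fin m) × Fin (m + 1) => insertEntry p q.2 q.1 := by
  rw [Fintype.bijective_iff_injective_and_card]
  refine ⟨?_, by simp [Fintype.card_perm, Nat.factorial_succ, mul_comm]⟩
  rintro ⟨σ, v⟩ ⟨τ, w⟩ h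
  obtain rfl : v = w := by simpa using DFunLike.congr_fun h p
  congr 1
  ext1 a
  simpa using DFunLike.congr_fun h (p.succAbove a)

lemma sum_insertEntry {M : Type*} [AddCommMonoid M] (p : Fin (m + 1))
    (F : Equiv.Perm (Fin (m + 1)) → M) :
    ∑ σ : Equiv.Perm (Fin m), ∑ v, F (insertEntry p v σ) = ∑ π, F π := by
  rw [← (insertEntry_bijective p).sum_comp F, Fintype.sum_prod_type]

lemma val_succAbove (p : Fin (m + 1)) (a : Fin m) :
    (p.succAbove a : ℕ) = if (a : ℕ) < p then (a : ℕ) else a + 1 := by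
  simp only [Fin.succAbove, Fin.lt_def, Fin.val_castSucc]
  split_ifs <;> rfl

lemma succAbove_eq_add_units_iff (p : Fin (m + 1)) (a b : Fin m) (ε : ℤˣ) :
    (p.succAbove b : ℤ) = p.succAbove a + ε ↔ (b : ℤ) = a + ε ∧ (max a b).castSucc ≠ p := by
  simp only [val_succAbove, Ne, Fin.ext_iff, Fin.val_castSucc, Fin.coe_max]
  obtain rfl | rfl := Int.units_eq_one_or ε <;> simp only [Units.val_one, Units.val_neg] <;>
    split_ifs <;> omega

end Insertion

section Adjacency

variable {m n : ℕ}

/-- The pairs of consecutive positions at which `π` changes by an element of `S`. The signs `1` and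
`-1` stand for up- and down-adjacencies. -/
def adjacencies (S : Finset ℤˣ) (π : Equiv.Perm (Fin n)) : Finset (Fin n × Fin n) :=
  {q | (q.2 : ℤ) = q.1 + 1 ∧ ∃ ε ∈ S, (π q.2 : ℤ) = π q.1 + ε}

lemma mem_adjacencies {S : Finset ℤˣ} {π : Equiv.Perm (Fin n)} {a b : Fin n} :
    (a, b) ∈ adjacencies S π ↔ (b : ℤ) = a + 1 ∧ ∃ ε ∈ S, (π b : ℤ) = π a + ε := by
  simp [adjacencies]

lemma adjacencies_union (S T : Finset ℤˣ) (π : Equiv.Perm (Fin n)) :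
    adjacencies (S ∪ T) π = adjacencies S π ∪ adjacencies T π := by
  ext ⟨a, b⟩
  simp only [mem_union, mem_adjacencies, or_and_right, exists_or, and_or_left]

lemma adjacencies_mono {S T : Finset ℤˣ} (h : S ⊆ T) (π : Equiv.Perm (Fin n)) :
    adjacencies S π ⊆ adjacencies T π := by
  rw [← union_eq_right.2 h, adjacencies_union]
  exact subset_union_left

lemma mem_adjacencies_insertEntry_iff {S : Finset ℤˣ} {p v : Fin (m + 1)}
    {σ : Equiv.Perm (Fin m)} {a b : Fin m} :
    (p.succAbove a, p.succAbove b) ∈ adjacencies S (insertEntry p v σ) ↔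
      (a, b) ∈ adjacencies S σ ∧ (max a b).castSucc ≠ p ∧ (max (σ a) (σ b)).castSucc ≠ v := by
  have hpos := succAbove_eq_add_units_iff p a b 1
  rw [Units.val_one] at hpos
  simp only [mem_adjacencies, insertEntry_succAbove, hpos, succAbove_eq_add_units_iff]
  tauto

lemma card_adjacencies_insertEntry (S : Finset ℤˣ) (p v : Fin (m + 1)) (σ : Equiv.Perm (Fin m)) :
    #(adjacencies S (insertEntry p v σ)) =
      #{q ∈ adjacencies S σ |
          (max q.1 q.2).castSucc ≠ p ∧ (max (σ q.1) (σ q.2)).castSucc ≠ v} +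
        #{q ∈ adjacencies S (insertEntry p v σ) | q.1 = p ∨ q.2 = p} := by
  rw [← card_filter_add_card_filter_not (fun q => q.1 = p ∨ q.2 = p), add_comm]
  congr 1
  rw [← card_image_of_injective {q ∈ adjacencies S σ | _}
    (p.succAbove_right_injective.prodMap p.succAbove_right_injective)]
  congr 1
  ext ⟨x, y⟩
  simp only [mem_filter, mem_image, Prod.exists, Prod.map_apply, Prod.mk.injEq, not_or,
    ← mem_adjacencies_insertEntry_iff]
  constructor
  · rintro ⟨hxy, hx, hy⟩
    obtain ⟨a, rfl⟩ := Fin.exists_succAbove_eq hx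
    obtain ⟨b, rfl⟩ := Fin.exists_succAbove_eq hy
    exact ⟨a, b, hxy, rfl, rfl⟩
  · rintro ⟨a, b, hab, rfl, rfl⟩
    exact ⟨hab, p.succAbove_ne a, p.succAbove_ne b⟩

lemma card_adjacencies_eq_sum (S : Finset ℤˣ) (π : Equiv.Perm (Fin (m + 1))) :
    #(adjacencies S π) =
      ∑ i : Fin m, ∑ ε ∈ S, if (π i.succ : ℤ) = π i.castSucc + ε then 1 else 0 := by
  rw [← sum_product', sum_boole, Nat.cast_id]
  symm
  refine card_bij (fun q _ => (q.1.castSucc, q.1.succ)) ?_ ?_ ?_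
  · rintro ⟨i, ε⟩ h
    simp only [mem_filter, mem_product, mem_univ, true_and] at h
    exact mem_adjacencies.2 ⟨by simp, ε, h⟩
  · rintro ⟨i, ε⟩ h ⟨j, δ⟩ h' hij
    simp only [mem_filter, mem_product, mem_univ, true_and] at h h'
    obtain rfl : i = j := by simpa using hij
    have : (ε : ℤ) = δ := by linarith [h.2, h'.2]
    rw [Units.ext this]
  · rintro ⟨x, y⟩ h
    obtain ⟨hpos, ε, hε, hval⟩ := mem_adjacencies.1 h
    obtain ⟨i, rfl⟩ : ∃ i : Fin m, i.castSucc = x := ⟨⟨x, by omega⟩, rfl⟩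
    obtain rfl : y = i.succ := by
      rw [Fin.ext_iff, Fin.val_succ]
      rw [Fin.val_castSucc] at hpos
      omega
    exact ⟨(i, ε), by simp [hε, hval], rfl⟩

end Adjacency

section Inflation

variable {m : ℕ}

/-- The value to insert next to `x` so that the new entry exceeds the old one by `ε`; the old entry
`x` itself moves up by one when `ε = -1`. -/
def inflatedValue (ε : ℤˣ) (x : Fin m) : Fin (m + 1) :=
  if ε = 1 then x.succ else x.castSucc

lemma inflatedValue_one (x : Fin m) : inflatedValue 1 x = x.succ :=
  if_pos rfl

lemma inflatedValue_neg_one (x : Fin m) : inflatedValue (-1) x = x.castSucc :=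
  if_neg (by decide)

lemma eq_succAbove_add_units_iff (v : Fin (m + 1)) (x : Fin m) (ε : ℤˣ) :
    (v : ℤ) = v.succAbove x + ε ↔ v = inflatedValue ε x := by
  rw [Fin.ext_iff, val_succAbove]
  obtain rfl | rfl := Int.units_eq_one_or ε <;>
    simp only [inflatedValue_one, inflatedValue_neg_one, Fin.val_succ, Fin.val_castSucc,
      Units.val_one, Units.val_neg] <;>
    split_ifs <;> omega

lemma succAbove_eq_self_add_units_iff (v : Fin (m + 1)) (x : Fin m) (ε : ℤˣ) :
    (v.succAbove x : ℤ) = v + ε ↔ v = inflatedValue (-ε) x := by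
  rw [← eq_succAbove_add_units_iff, Units.val_neg]
  constructor <;> intro h <;> linarith

lemma eq_add_units_of_inflatedValue_eq {ε δ : ℤˣ} {x y : Fin m} (hxy : y ≠ x)
    (h : inflatedValue ε x = inflatedValue δ y) : (y : ℤ) = x + ε := by
  rw [ne_eq, Fin.ext_iff] at hxy
  obtain rfl | rfl := Int.units_eq_one_or ε <;> obtain rfl | rfl := Int.units_eq_one_or δ <;>
    simp only [inflatedValue_one, inflatedValue_neg_one, Fin.ext_iff, Fin.val_succ,
      Fin.val_castSucc, Units.val_one, Units.val_neg] at h ⊢ <;>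
    omega

/-- The permutation obtained from `σ` by replacing the entry at position `i` by an adjacency of
sign `ε`. -/
def inflate (i : Fin m) (ε : ℤˣ) (σ : Equiv.Perm (Fin m)) : Equiv.Perm (Fin (m + 1)) :=
  insertEntry i.succ (inflatedValue ε (σ i)) σ

lemma insertEntry_succ_eq_add_units_iff (i : Fin m) (v : Fin (m + 1)) (ε : ℤˣ)
    (σ : Equiv.Perm (Fin m)) :
    (insertEntry i.succ v σ i.succ : ℤ) = insertEntry i.succ v σ i.castSucc + ε ↔
      v = inflatedValue ε (σ i) := by
  rw [← Fin.succAbove_succ_self, insertEntry_self, insertEntry_succAbove,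
    eq_succAbove_add_units_iff]

lemma sum_card_adjacencies_nsmul {M : Type*} [AddCommMonoid M] (S : Finset ℤˣ)
    (F : Equiv.Perm (Fin (m + 1)) → M) :
    ∑ π, #(adjacencies S π) • F π =
      ∑ i : Fin m, ∑ ε ∈ S, ∑ σ : Equiv.Perm (Fin m), F (inflate i ε σ) := by
  simp_rw [card_adjacencies_eq_sum, sum_smul, ite_smul, one_nsmul, zero_nsmul]
  rw [sum_comm]
  refine sum_congr rfl fun i _ => ?_
  rw [sum_comm]
  refine sum_congr rfl fun ε _ => ?_
  rw [← sum_insertEntry i.succ]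
  simp only [insertEntry_succ_eq_add_units_iff, sum_ite_eq', mem_univ, if_true, inflate]

lemma filter_adjacencies_inflate {S : Finset ℤˣ} {ε : ℤˣ} (hε : ε ∈ S) {i : Fin m}
    {σ : Equiv.Perm (Fin m)} (hi : ∀ b, (i, b) ∉ adjacencies univ σ) :
    {q ∈ adjacencies S (inflate i ε σ) | q.1 = i.succ ∨ q.2 = i.succ} =
      {(i.castSucc, i.succ)} := by
  ext ⟨x, y⟩
  simp only [mem_filter, mem_singleton, Prod.mk.injEq]
  constructor
  · rintro ⟨hxy, rfl | rfl⟩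
    · obtain ⟨hpos, δ, -, hval⟩ := mem_adjacencies.1 hxy
      obtain ⟨b, rfl⟩ := Fin.exists_succAbove_eq (x := y) (y := i.succ) (by rintro rfl; omega)
      rw [inflate, insertEntry_self, insertEntry_succAbove,
        succAbove_eq_self_add_units_iff] at hval
      have hb : (b : ℤ) = i + 1 := by
        rw [val_succAbove, Fin.val_succ] at hpos
        split_ifs at hpos <;> omega
      have hne : σ b ≠ σ i := σ.injective.ne (by rintro rfl; omega)
      exact absurd
        (mem_adjacencies.2 ⟨hb, ε, mem_univ ε, eq_add_units_of_inflatedValue_eq hne hval⟩) (hi b)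
    · obtain ⟨hpos, -⟩ := mem_adjacencies.1 hxy
      refine ⟨?_, rfl⟩
      rw [Fin.ext_iff, Fin.val_castSucc]
      rw [Fin.val_succ] at hpos
      omega
  · rintro ⟨rfl, rfl⟩
    exact ⟨mem_adjacencies.2 ⟨by simp, ε, hε, by rw [inflate, insertEntry_succ_eq_add_units_iff]⟩,
      Or.inr rfl⟩

lemma card_adjacencies_inflate {S : Finset ℤˣ} {ε : ℤˣ} (hε : ε ∈ S) {i : Fin m}
    {σ : Equiv.Perm (Fin m)} (hi : ∀ q ∈ adjacencies univ σ, q.1 ≠ i ∧ q.2 ≠ i) :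
    #(adjacencies S (inflate i ε σ)) = #(adjacencies S σ) + 1 := by
  rw [inflate, card_adjacencies_insertEntry, ← inflate,
    filter_adjacencies_inflate hε fun b hb => (hi _ hb).1 rfl, card_singleton,
    filter_true_of_mem]
  rintro ⟨a, b⟩ hab
  obtain ⟨ha, hb⟩ := hi _ (adjacencies_mono (subset_univ S) σ hab)
  obtain ⟨hpos, δ, -, hval⟩ := mem_adjacencies.1 hab
  have hσa : (σ a : ℕ) ≠ σ i := fun h => ha (σ.injective (Fin.ext h))
  have hσb : (σ b : ℕ) ≠ σ i := fun h => hb (σ.injective (Fin.ext h))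
  have hai : (a : ℕ) ≠ i := fun h => ha (Fin.ext h)
  constructor
  · simp only [ne_eq, Fin.ext_iff, Fin.val_castSucc, Fin.coe_max, Fin.val_succ]
    omega
  · simp only [ne_eq, Fin.ext_iff, Fin.val_castSucc, Fin.coe_max]
    obtain rfl | rfl := Int.units_eq_one_or ε <;> obtain rfl | rfl := Int.units_eq_one_or δ <;>
      simp only [inflatedValue_one, inflatedValue_neg_one, Fin.val_succ, Fin.val_castSucc,
        Units.val_one, Units.val_neg] at hval ⊢ <;>
      omega

lemma card_filter_card_adjacencies_inflate_ne_le {S : Finset ℤˣ} {ε : ℤˣ} (hε : ε ∈ S)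
    (σ : Equiv.Perm (Fin m)) :
    #{i | #(adjacencies S (inflate i ε σ)) ≠ #(adjacencies S σ) + 1} ≤
      2 * #(adjacencies univ σ) := by
  have hsub : ({i | #(adjacencies S (inflate i ε σ)) ≠ #(adjacencies S σ) + 1} : Finset (Fin m)) ⊆
      (adjacencies univ σ).image Prod.fst ∪ (adjacencies univ σ).image Prod.snd := by
    intro i hi
    contrapose! hi
    simp only [mem_union, mem_image, not_or, not_exists, not_and] at hi
    simp [card_adjacencies_inflate hε fun q hq => ⟨hi.1 q hq, hi.2 q hq⟩]
  calc _ ≤ _ := (card_le_card hsub).trans (card_union_le _ _)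
    _ ≤ #(adjacencies univ σ) + #(adjacencies univ σ) :=
      add_le_add card_image_le card_image_le
    _ = _ := (two_mul _).symm

end Inflation

section Prepending

lemma card_adjacencies_prepend {k : ℕ} (S : Finset ℤˣ) {v : Fin (k + 2)}
    {σ : Equiv.Perm (Fin (k + 1))}
    (hv : ∀ q ∈ adjacencies univ σ, (max (σ q.1) (σ q.2)).castSucc ≠ v)
    (hlow : (σ 0).castSucc ≠ v) (hhigh : (σ 0).succ ≠ v) :
    #(adjacencies S (insertEntry 0 v σ)) = #(adjacencies S σ) := by
  have hnew : {q ∈ adjacencies S (insertEntry 0 v σ) | q.1 = 0 ∨ q.2 = 0} = ∅ := by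
    refine filter_eq_empty_iff.2 ?_
    rintro ⟨x, y⟩ hxy h
    obtain ⟨hpos, δ, -, hval⟩ := mem_adjacencies.1 hxy
    obtain rfl | rfl : x = 0 ∨ y = 0 := h
    · obtain rfl : y = Fin.succAbove 0 0 := by
        rw [Fin.ext_iff, Fin.zero_succAbove, Fin.val_succ, Fin.val_zero]
        rw [Fin.val_zero] at hpos
        omega
      rw [insertEntry_self, insertEntry_succAbove, succAbove_eq_self_add_units_iff,
        inflatedValue] at hval
      split_ifs at hval
      exacts [hhigh hval.symm, hlow hval.symm]
    · rw [Fin.val_zero] at hpos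
      omega
  rw [card_adjacencies_insertEntry, hnew, card_empty, add_zero, filter_true_of_mem]
  rintro ⟨a, b⟩ hab
  refine ⟨?_, hv _ (adjacencies_mono (subset_univ S) σ hab)⟩
  obtain ⟨hpos, -⟩ := mem_adjacencies.1 hab
  simp only [ne_eq, Fin.ext_iff, Fin.val_castSucc, Fin.coe_max, Fin.val_zero]
  omega

lemma card_filter_card_adjacencies_prepend_ne_le {m : ℕ} (S : Finset ℤˣ)
    (σ : Equiv.Perm (Fin m)) :
    #{v | #(adjacencies S (insertEntry 0 v σ)) ≠ #(adjacencies S σ)} ≤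
      #(adjacencies univ σ) + 2 := by
  obtain _ | k := m
  · exact (card_le_univ _).trans (by simp)
  have hsub : ({v | #(adjacencies S (insertEntry 0 v σ)) ≠ #(adjacencies S σ)} : Finset _) ⊆
      (adjacencies univ σ).image (fun q => (max (σ q.1) (σ q.2)).castSucc) ∪
        {(σ 0).castSucc, (σ 0).succ} := by
    intro v hv
    contrapose! hv
    simp only [mem_union, mem_image, mem_insert, mem_singleton, not_or, not_exists, not_and] at hv
    simp [card_adjacencies_prepend S hv.1 (Ne.symm hv.2.1) (Ne.symm hv.2.2)]
  exact (card_le_card hsub).trans <| (card_union_le _ _).trans <|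
    add_le_add card_image_le card_le_two

end Prepending

section GeneratingPolynomial

lemma abs_sum_pow_sub_pow_le {ι : Type*} (s : Finset ι) (a b : ι → ℕ) {t : ℝ}
    (ht : t ∈ Set.Icc (0 : ℝ) 1) :
    |∑ x ∈ s, (t ^ a x - t ^ b x)| ≤ #{x ∈ s | a x ≠ b x} := by
  rw [← sum_boole]
  refine (abs_sum_le_sum_abs _ _).trans (sum_le_sum fun x _ => ?_)
  split_ifs with h
  · exact abs_sub_le_of_nonneg_of_le (pow_nonneg ht.1 _) (pow_le_one₀ ht.1 ht.2)
      (pow_nonneg ht.1 _) (pow_le_one₀ ht.1 ht.2)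
  · simp [not_not.1 h]

/-- The generating polynomial, evaluated at `t`, of the number of adjacencies with sign in `S`
over all permutations of length `n`. -/
noncomputable def adjacencyPoly (S : Finset ℤˣ) (n : ℕ) (t : ℝ) : ℝ :=
  ∑ π : Equiv.Perm (Fin n), t ^ #(adjacencies S π)

/-- The number of permutations of length `n` without adjacencies of sign in `S`. -/
noncomputable def numAdjacencyFree (S : Finset ℤˣ) (n : ℕ) : ℕ :=
  #{π : Equiv.Perm (Fin n) | adjacencies S π = ∅}

lemma adjacencyPoly_zero (S : Finset ℤˣ) (n : ℕ) :
    adjacencyPoly S n 0 = numAdjacencyFree S n := by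
  simp [adjacencyPoly, numAdjacencyFree, zero_pow_eq]

lemma adjacencyPoly_one (S : Finset ℤˣ) (n : ℕ) : adjacencyPoly S n 1 = n.factorial := by
  simp [adjacencyPoly, Fintype.card_perm]

lemma abs_adjacencyPoly_le (S : Finset ℤˣ) (n : ℕ) {t : ℝ} (ht : t ∈ Set.Icc (0 : ℝ) 1) :
    |adjacencyPoly S n t| ≤ n.factorial := by
  rw [adjacencyPoly, abs_of_nonneg (sum_nonneg fun _ _ => pow_nonneg ht.1 _),
    ← adjacencyPoly_one S n]
  exact sum_le_sum fun _ _ => pow_le_pow_left₀ ht.1 ht.2 _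

lemma hasDerivAt_adjacencyPoly (S : Finset ℤˣ) (n : ℕ) (t : ℝ) :
    HasDerivAt (adjacencyPoly S n)
      (∑ π : Equiv.Perm (Fin n), #(adjacencies S π) * t ^ (#(adjacencies S π) - 1)) t :=
  HasDerivAt.fun_sum fun _ _ => hasDerivAt_pow _ t

lemma sum_card_adjacencies_le (m : ℕ) :
    ∑ σ : Equiv.Perm (Fin m), #(adjacencies univ σ) ≤ 2 * m.factorial := by
  obtain _ | k := m
  · simp [adjacencies]
  have h := sum_card_adjacencies_nsmul (m := k) univ fun _ => 1
  simp only [smul_eq_mul, mul_one, sum_const, card_univ, Fintype.card_perm, Fintype.card_fin,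
    Fintype.card_units_int] at h
  rw [h, Nat.factorial_succ]
  nlinarith [k.factorial_pos]

lemma abs_deriv_adjacencyPoly_succ_sub_adjacencyPoly_le (S : Finset ℤˣ) (m : ℕ) {t : ℝ}
    (ht : t ∈ Set.Icc (0 : ℝ) 1) :
    |deriv (adjacencyPoly S (m + 1)) t - #S * (m * adjacencyPoly S m t)| ≤
      4 * #S * m.factorial := by
  have hderiv : deriv (adjacencyPoly S (m + 1)) t =
      ∑ ε ∈ S, ∑ σ : Equiv.Perm (Fin m), ∑ i : Fin m,
        t ^ (#(adjacencies S (inflate i ε σ)) - 1) := by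
    rw [(hasDerivAt_adjacencyPoly S (m + 1) t).deriv]
    simp_rw [← nsmul_eq_mul]
    rw [sum_card_adjacencies_nsmul S fun π => t ^ (#(adjacencies S π) - 1), sum_comm]
    exact sum_congr rfl fun _ _ => sum_comm
  have hpoly : #S * (m * adjacencyPoly S m t) =
      ∑ _ε ∈ S, ∑ σ : Equiv.Perm (Fin m), ∑ _i : Fin m, t ^ #(adjacencies S σ) := by
    simp [adjacencyPoly, mul_sum]
  have hinner (ε : ℤˣ) (hε : ε ∈ S) (σ : Equiv.Perm (Fin m)) :
      |∑ i : Fin m, (t ^ (#(adjacencies S (inflate i ε σ)) - 1) - t ^ #(adjacencies S σ))| ≤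
        2 * #(adjacencies univ σ) := by
    refine (abs_sum_pow_sub_pow_le univ _ _ ht).trans ?_
    refine mod_cast le_trans (card_le_card ?_) (card_filter_card_adjacencies_inflate_ne_le hε σ)
    exact monotone_filter_right univ fun _ _ hne => by omega
  have htotal : (∑ σ : Equiv.Perm (Fin m), #(adjacencies univ σ) : ℝ) ≤ 2 * m.factorial :=
    mod_cast sum_card_adjacencies_le m
  rw [hderiv, hpoly]
  simp_rw [← sum_sub_distrib]
  calc
    _ ≤ ∑ ε ∈ S, ∑ σ : Equiv.Perm (Fin m), 2 * (#(adjacencies univ σ) : ℝ) :=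
      (abs_sum_le_sum_abs _ _).trans <| sum_le_sum fun ε hε =>
        (abs_sum_le_sum_abs _ _).trans <| sum_le_sum fun σ _ => hinner ε hε σ
    _ = #S * (2 * ∑ σ : Equiv.Perm (Fin m), (#(adjacencies univ σ) : ℝ)) := by
      rw [sum_const, nsmul_eq_mul, ← mul_sum]
    _ ≤ #S * (2 * (2 * m.factorial)) := by gcongr
    _ = 4 * #S * m.factorial := by ring

lemma abs_adjacencyPoly_succ_sub_le (S : Finset ℤˣ) (m : ℕ) {t : ℝ}
    (ht : t ∈ Set.Icc (0 : ℝ) 1) :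
    |adjacencyPoly S (m + 1) t - (m + 1) * adjacencyPoly S m t| ≤ 4 * m.factorial := by
  have hpoly : (m + 1) * adjacencyPoly S m t =
      ∑ σ : Equiv.Perm (Fin m), ∑ _v : Fin (m + 1), t ^ #(adjacencies S σ) := by
    simp [adjacencyPoly, mul_sum]
  have hinner (σ : Equiv.Perm (Fin m)) :
      |∑ v, (t ^ #(adjacencies S (insertEntry 0 v σ)) - t ^ #(adjacencies S σ))| ≤
        #(adjacencies univ σ) + 2 :=
    (abs_sum_pow_sub_pow_le univ _ _ ht).trans
      (mod_cast card_filter_card_adjacencies_prepend_ne_le S σ)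
  have htotal : (∑ σ : Equiv.Perm (Fin m), #(adjacencies univ σ) : ℝ) ≤ 2 * m.factorial :=
    mod_cast sum_card_adjacencies_le m
  rw [hpoly, adjacencyPoly, ← sum_insertEntry 0]
  simp_rw [← sum_sub_distrib]
  calc
    _ ≤ ∑ σ : Equiv.Perm (Fin m), ((#(adjacencies univ σ) : ℝ) + 2) :=
      (abs_sum_le_sum_abs _ _).trans <| sum_le_sum fun σ _ => hinner σ
    _ = ∑ σ : Equiv.Perm (Fin m), (#(adjacencies univ σ) : ℝ) + 2 * m.factorial := by
      simp [sum_add_distrib, Fintype.card_perm, mul_comm]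
    _ ≤ 4 * m.factorial := by linarith

lemma abs_deriv_adjacencyPoly_sub_mul_self_le (S : Finset ℤˣ) (m : ℕ) {t : ℝ}
    (ht : t ∈ Set.Icc (0 : ℝ) 1) :
    |deriv (adjacencyPoly S (m + 1)) t - #S * adjacencyPoly S (m + 1) t| ≤
      9 * #S * m.factorial := by
  set l : ℝ := (#S : ℝ)
  set G := adjacencyPoly S m t
  set H := adjacencyPoly S (m + 1) t
  set D := deriv (adjacencyPoly S (m + 1)) t
  calc
    |D - l * H| = |(D - l * (m * G)) - l * ((H - (m + 1) * G) + G)| := by ring_nf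
    _ ≤ |D - l * (m * G)| + l * (|H - (m + 1) * G| + |G|) := by
      refine (abs_sub _ _).trans ?_
      rw [abs_mul, Nat.abs_cast]
      gcongr
      exact abs_add_le _ _
    _ ≤ 4 * l * m.factorial + l * (4 * m.factorial + m.factorial) := by
      gcongr
      · exact abs_deriv_adjacencyPoly_succ_sub_adjacencyPoly_le S m ht
      · exact abs_adjacencyPoly_succ_sub_le S m ht
      · exact abs_adjacencyPoly_le S m ht
    _ = 9 * l * m.factorial := by ring

end GeneratingPolynomial

section Density

lemma norm_exp_neg_smul_sub_le {E : Type*} [NormedAddCommGroup E] [NormedSpace ℝ E] {F F' : ℝ → E}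
    {l K a b : ℝ} (hl : 0 ≤ l) (hab : a ≤ b)
    (hF : ∀ t ∈ Set.Icc a b, HasDerivWithinAt F (F' t) (Set.Icc a b) t)
    (hK : ∀ t ∈ Set.Ico a b, ‖F' t - l • F t‖ ≤ K) :
    ‖Real.exp (-(l * (b - a))) • F b - F a‖ ≤ K * (b - a) := by
  have hderiv (t : ℝ) (ht : t ∈ Set.Icc a b) :
      HasDerivWithinAt (fun t => Real.exp (-(l * (t - a))) • F t)
        (Real.exp (-(l * (t - a))) • (F' t - l • F t)) (Set.Icc a b) t := by
    have hexp : HasDerivAt (fun t => Real.exp (-(l * (t - a))))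
        (Real.exp (-(l * (t - a))) * -l) t := by
      simpa using ((((hasDerivAt_id t).sub_const a).const_mul l).neg).exp
    exact (hexp.hasDerivWithinAt.smul (hF t ht)).congr_deriv (by module)
  have hbound (t : ℝ) (ht : t ∈ Set.Ico a b) :
      ‖Real.exp (-(l * (t - a))) • (F' t - l • F t)‖ ≤ K := by
    rw [norm_smul, Real.norm_of_nonneg (Real.exp_nonneg _)]
    have hexp : Real.exp (-(l * (t - a))) ≤ 1 :=
      Real.exp_le_one_iff.2 (neg_nonpos.2 (mul_nonneg hl (sub_nonneg.2 ht.1)))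
    exact (mul_le_of_le_one_left (norm_nonneg _) hexp).trans (hK t ht)
  simpa using norm_image_sub_le_of_norm_deriv_le_segment' hderiv hbound b (Set.right_mem_Icc.2 hab)

lemma abs_numAdjacencyFree_div_factorial_sub_exp_le (S : Finset ℤˣ) {n : ℕ} (hn : 1 ≤ n) :
    |(numAdjacencyFree S n : ℝ) / n.factorial - Real.exp (-#S)| ≤ 9 * #S / n := by
  obtain ⟨m, rfl⟩ := Nat.exists_eq_add_of_le' hn
  have hode : |Real.exp (-#S) * (m + 1).factorial - numAdjacencyFree S (m + 1)| ≤
      9 * #S * m.factorial := by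
    simpa [adjacencyPoly_zero, adjacencyPoly_one] using
      norm_exp_neg_smul_sub_le (Nat.cast_nonneg #S) zero_le_one
        (fun t _ => (hasDerivAt_adjacencyPoly S (m + 1) t).differentiableAt.hasDerivAt
          |>.hasDerivWithinAt)
        (fun t ht => abs_deriv_adjacencyPoly_sub_mul_self_le S m (Set.Ico_subset_Icc_self ht))
  have hfact : (0 : ℝ) < (m + 1).factorial := by positivity
  rw [abs_sub_comm, ← mul_div_cancel_right₀ (Real.exp (-#S)) hfact.ne', ← sub_div, abs_div,
    abs_of_pos hfact, div_le_iff₀ hfact]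
  refine hode.trans_eq ?_
  rw [Nat.factorial_succ]
  push_cast
  field_simp

end Density

section InclusionExclusion

lemma adjacencies_one_eq_empty_iff {n : ℕ} (π : Equiv.Perm (Fin n)) :
    adjacencies {1} π = ∅ ↔ ¬ HasUpAdj ⟨n, π⟩ := by
  simp only [eq_empty_iff_forall_notMem, Prod.forall, mem_adjacencies, HasUpAdj, mem_singleton,
    exists_eq_left, Units.val_one, not_exists]
  norm_cast

lemma adjacencies_neg_one_eq_empty_iff {n : ℕ} (π : Equiv.Perm (Fin n)) :
    adjacencies {-1} π = ∅ ↔ ¬ HasDownAdj ⟨n, π⟩ := by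
  simp only [eq_empty_iff_forall_notMem, Prod.forall, mem_adjacencies, HasDownAdj, mem_singleton,
    exists_eq_left, Units.val_neg, Units.val_one, not_exists, ← sub_eq_add_neg, eq_sub_iff_add_eq,
    eq_comm (b := (π _ : ℤ))]
  norm_cast

lemma adjacencies_univ_eq_empty_iff {n : ℕ} (π : Equiv.Perm (Fin n)) :
    adjacencies univ π = ∅ ↔ ¬ HasUpAdj ⟨n, π⟩ ∧ ¬ HasDownAdj ⟨n, π⟩ := by
  rw [UnitsInt.univ, insert_eq, adjacencies_union, union_eq_empty, adjacencies_one_eq_empty_iff,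
    adjacencies_neg_one_eq_empty_iff]

lemma numOpposing_add_numAdjacencyFree (n : ℕ) :
    numOpposing n + numAdjacencyFree {1} n + numAdjacencyFree {-1} n =
      n.factorial + numAdjacencyFree univ n := by
  have hfact : n.factorial = ∑ _π : Equiv.Perm (Fin n), 1 := by simp [Fintype.card_perm]
  simp only [numOpposing, numAdjacencyFree, adjacencies_one_eq_empty_iff,
    adjacencies_neg_one_eq_empty_iff, adjacencies_univ_eq_empty_iff, card_filter, hfact,
    ← sum_add_distrib]
  refine sum_congr rfl fun π _ => ?_
  by_cases hup : HasUpAdj ⟨n, π⟩ <;> by_cases hdown : HasDownAdj ⟨n, π⟩ <;> simp [hup, hdown]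

lemma numOpposing_div_factorial (n : ℕ) :
    (numOpposing n : ℝ) / n.factorial =
      1 - numAdjacencyFree {1} n / n.factorial - numAdjacencyFree {-1} n / n.factorial +
        numAdjacencyFree univ n / n.factorial := by
  have h : (numOpposing n + numAdjacencyFree {1} n + numAdjacencyFree {-1} n : ℝ) =
      n.factorial + numAdjacencyFree univ n := mod_cast numOpposing_add_numAdjacencyFree n
  field_simp
  linarith

end InclusionExclusion

end OpposingAdjacency

/-- **(Lemma `lem-incdec`.)**  `s_n/n! = (1 − 1/e)² + O(1/n)`: there is a
constant `C > 0` with `|s_n/n! − (1 − 1/e)²| ≤ C/n` for all `n ≥ 1`. -/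
theorem opposing_adjacency_density :
    ∃ C : ℝ, 0 < C ∧ ∀ n : ℕ, 1 ≤ n →
      |(numOpposing n : ℝ) / (Nat.factorial n : ℝ) - (1 - 1 / Real.exp 1) ^ 2| ≤ C / n := by
  refine ⟨36, by norm_num, fun n hn => ?_⟩
  have hup := OpposingAdjacency.abs_numAdjacencyFree_div_factorial_sub_exp_le {1} hn
  have hdown := OpposingAdjacency.abs_numAdjacencyFree_div_factorial_sub_exp_le {-1} hn
  have hboth := OpposingAdjacency.abs_numAdjacencyFree_div_factorial_sub_exp_le Finset.univ hn
  rw [Finset.card_singleton, Nat.cast_one] at hup hdown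
  rw [Finset.card_univ, Fintype.card_units_int, Nat.cast_ofNat] at hboth
  have hlimit : (1 - 1 / Real.exp 1) ^ 2 =
      1 - Real.exp (-1) - Real.exp (-1) + Real.exp (-2) := by
    rw [one_div, ← Real.exp_neg, show (-2 : ℝ) = -1 + -1 by norm_num, Real.exp_add]
    ring
  have hbudget : (36 : ℝ) / n = 9 * 1 / n + 9 * 1 / n + 9 * 2 / n := by ring
  rw [OpposingAdjacency.numOpposing_div_factorial, hlimit, hbudget]
  rw [abs_le] at hup hdown hboth ⊢
  constructor <;> linarith
end
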